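/- Fix integers d ≥ 2, q with 1 ≤ q ≤ d-1, γ with 0 ≤ γ ≤ q-1, and reals K < 0, u > 0, and let f be the density f_{d,q,γ,K} of the distance d_K(o,E∩L). Then for every real α ≤ 0 the integral ∫_0^∞ δ^α · f(δ) dδ is finite if and only if α > γ - q. -/

import Mathlib

open Real MeasureTheory Filter Asymptotics

/-- Surface area `ω_n = 2 π^{n/2} / Γ(n/2)` of the Euclidean unit sphere in `ℝ^n`. -/
noncomputable def omegaS (n : ℕ) : ℝ := 2 * Real.pi ^ ((n : ℝ) / 2) / Real.Gamma ((n : ℝ) / 2)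

/-- The constant `D(d,q,γ)`. -/
noncomputable def Dconst (d q γ : ℕ) : ℝ :=
  omegaS (γ + 1) * omegaS (q - γ) * omegaS (d - q) / (omegaS (d - q + γ + 1) * omegaS (d - γ))

/-- `R_K(x)`, the Euclidean (Beltrami–Klein) radius of a hyperbolic ball of radius `x`. -/
noncomputable def RK (K x : ℝ) : ℝ :=
  Real.sinh (Real.sqrt (-K) * x) /
    (Real.sqrt (-K) * Real.sqrt (1 + Real.sinh (Real.sqrt (-K) * x) ^ 2))

/-- `C_K(d,m,u)`, the invariant measure of the `m`-flats meeting the ball of radius `u`. -/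
noncomputable def Cconst (K : ℝ) (d m : ℕ) (u : ℝ) : ℝ :=
  omegaS (d - m) * Real.sqrt (-K) ^ (-(d : ℝ) + (m : ℝ) + 1) *
    ∫ r in (0:ℝ)..u,
      Real.cosh (Real.sqrt (-K) * r) ^ m * Real.sinh (Real.sqrt (-K) * r) ^ (d - m - 1)

/-- `P(d,q,γ,K,u)`, the hyperbolic intersection probability of the random flats `E` and `L`. -/
noncomputable def Pprob (d q γ : ℕ) (K u : ℝ) : ℝ :=
  Dconst d q γ * omegaS (d - γ) / Cconst K d (d - q + γ) u *
    ∫ r in (0:ℝ)..(1 / Real.sqrt (-K)),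
      r ^ ((q : ℝ) - (γ : ℝ) - 1) *
        ∫ z in (0:ℝ)..(min 1 (RK K u / r)),
          z ^ q * (1 - z ^ 2) ^ (((d : ℝ) - (q : ℝ)) / 2 - 1) *
            (1 + K * r ^ 2 * z ^ 2) ^ (-((d : ℝ) + 1) / 2)

/-- `F_{K,u}(δ)`, the distribution function of the distance of `E ∩ L` to the origin. -/
noncomputable def Fdist (d q γ : ℕ) (K u δ : ℝ) : ℝ :=
  Dconst d q γ * omegaS (d - γ) / Cconst K d (d - q + γ) u *
    ∫ r in (0:ℝ)..(RK K δ),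
      r ^ ((q : ℝ) - (γ : ℝ) - 1) *
        ∫ z in (0:ℝ)..(min 1 (RK K u / r)),
          z ^ q * (1 - z ^ 2) ^ (((d : ℝ) - (q : ℝ)) / 2 - 1) *
            (1 + K * r ^ 2 * z ^ 2) ^ (-((d : ℝ) + 1) / 2)

/-- `f_{d,q,γ,K}(δ)`, the density of the distance of `E ∩ L` to the origin. -/
noncomputable def fdens (d q γ : ℕ) (K u δ : ℝ) : ℝ :=
  Dconst d q γ * omegaS (d - γ) / Cconst K d (d - q + γ) u *
    (RK K δ ^ ((q : ℝ) - (γ : ℝ) - 1) / Real.cosh (Real.sqrt (-K) * δ) ^ 2) *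
    ∫ z in (0:ℝ)..(min 1 (RK K u / RK K δ)),
      z ^ q * (1 - z ^ 2) ^ (((d : ℝ) - (q : ℝ)) / 2 - 1) *
        (1 + K * RK K δ ^ 2 * z ^ 2) ^ (-((d : ℝ) + 1) / 2)

/-- The limiting constant `ρ(u,q,γ,κ)` in the critical phase. -/
noncomputable def rhoConst (u : ℝ) (q γ : ℕ) (κ : ℝ) : ℝ :=
  omegaS (γ + 1) * (2 * Real.pi) ^ (-((γ : ℝ) + 1) / 2) * u ^ (q + 1) *
    κ ^ (((γ : ℝ) + 1) / 2) *
    (∫ s in (0:ℝ)..u, Real.exp (κ * s ^ 2 / 2) * s ^ ((q : ℝ) - (γ : ℝ) - 1))⁻¹ *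
    ∫ r in (0:ℝ)..1,
      r ^ ((q : ℝ) - (γ : ℝ) - 1) *
        ∫ v in (0:ℝ)..(1 / r),
          v ^ q * Real.exp (-(1 / 2) * u ^ 2 * κ * v ^ 2 * (1 - r ^ 2))

/-!
Since `R_K(δ) = tanh(√(-K) δ) / √(-K)` is comparable to `δ` near the origin, and the inner integral
of the density lies between two positive constants there, the density behaves like `δ ^ (q - γ - 1)`
at the origin. The factor `cosh⁻²` and the bound `R_K(δ) ≤ δ` give
`f(δ) ≤ C δ ^ (q - γ - 1) exp(-2 √(-K) δ)` on all of `(0, ∞)`. Hence `∫ δ ^ α f(δ) dδ` converges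
exactly when `δ ^ (α + q - γ - 1)` is integrable at the origin, for every real `α`.
-/

section Hyperbolic

theorem sinh_le_self_mul_cosh {x : ℝ} (hx : 0 ≤ x) : sinh x ≤ x * cosh x := by
  have hderiv : ∀ y ∈ interior (Set.Icc 0 x), deriv sinh y ≤ cosh x := fun y hy => by
    rw [interior_Icc] at hy
    rw [Real.deriv_sinh, Real.cosh_le_cosh, abs_of_pos hy.1, abs_of_nonneg hx]
    exact hy.2.le
  have := (convex_Icc 0 x).image_sub_le_mul_sub_of_deriv_le Real.continuous_sinh.continuousOn
    Real.differentiable_sinh.differentiableOn hderiv 0 ⟨le_rfl, hx⟩ x ⟨hx, le_rfl⟩ hx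
  rwa [Real.sinh_zero, sub_zero, sub_zero, mul_comm] at this

theorem tanh_le_self {x : ℝ} (hx : 0 ≤ x) : tanh x ≤ x := by
  rw [Real.tanh_eq_sinh_div_cosh, div_le_iff₀ (Real.cosh_pos x)]
  exact sinh_le_self_mul_cosh hx

theorem div_cosh_le_tanh {x : ℝ} (hx : 0 ≤ x) : x / cosh x ≤ tanh x := by
  rw [Real.tanh_eq_sinh_div_cosh]
  exact div_le_div_of_nonneg_right (Real.self_le_sinh_iff.2 hx) (Real.cosh_pos x).le

theorem tanh_monotone : Monotone tanh := fun x y hxy => by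
  have mem (t : ℝ) : tanh t ∈ Set.Ioo (-1) 1 := ⟨Real.neg_one_lt_tanh t, Real.tanh_lt_one t⟩
  rwa [← Real.artanh_le_artanh_iff (mem x) (mem y), Real.artanh_tanh, Real.artanh_tanh]

theorem tanh_pos {x : ℝ} (hx : 0 < x) : 0 < tanh x :=
  (div_pos hx (Real.cosh_pos x)).trans_le (div_cosh_le_tanh hx.le)

theorem inv_cosh_sq_le_exp (x : ℝ) : (cosh x ^ 2)⁻¹ ≤ 4 * exp (-2 * x) := by
  have hcosh : exp x / 2 ≤ cosh x := by
    rw [Real.cosh_eq]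
    linarith [exp_pos (-x)]
  calc (cosh x ^ 2)⁻¹ ≤ ((exp x / 2) ^ 2)⁻¹ := by gcongr
    _ = 4 * exp (-2 * x) := by
      rw [neg_mul, Real.exp_neg, two_mul, Real.exp_add]
      field_simp
      norm_num

end Hyperbolic

section KleinRadius

variable {K x : ℝ}

theorem RK_eq_tanh_div_sqrt (K x : ℝ) : RK K x = tanh (√(-K) * x) / √(-K) := by
  rw [RK, add_comm, ← Real.cosh_sq, Real.sqrt_sq (Real.cosh_pos _).le, ← div_div,
    div_right_comm, ← Real.tanh_eq_sinh_div_cosh]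

theorem RK_pos (hK : K < 0) (hx : 0 < x) : 0 < RK K x := by
  have hsqrt : 0 < √(-K) := Real.sqrt_pos.2 (neg_pos.2 hK)
  rw [RK_eq_tanh_div_sqrt]
  exact div_pos (tanh_pos (mul_pos hsqrt hx)) hsqrt

theorem RK_monotone (K : ℝ) : Monotone (RK K) := fun x y hxy => by
  simp only [RK_eq_tanh_div_sqrt]
  gcongr
  exact tanh_monotone (by gcongr)

theorem measurable_RK (K : ℝ) : Measurable (RK K) := by
  unfold RK
  fun_prop

theorem RK_le_self (hx : 0 ≤ x) : RK K x ≤ x := by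
  rw [RK_eq_tanh_div_sqrt]
  refine div_le_of_le_mul₀ (Real.sqrt_nonneg _) hx ?_
  exact (tanh_le_self (by positivity)).trans_eq (mul_comm _ _)

theorem div_cosh_le_RK (hK : K < 0) (hx : 0 ≤ x) : x / cosh (√(-K) * x) ≤ RK K x := by
  have hsqrt : 0 < √(-K) := Real.sqrt_pos.2 (neg_pos.2 hK)
  calc x / cosh (√(-K) * x) = √(-K) * x / cosh (√(-K) * x) / √(-K) := by field_simp
    _ ≤ tanh (√(-K) * x) / √(-K) := by
      gcongr
      exact div_cosh_le_tanh (by positivity)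
    _ = RK K x := (RK_eq_tanh_div_sqrt K x).symm

theorem one_add_mul_RK_sq_pos (hK : K < 0) : 0 < 1 + K * RK K x ^ 2 := by
  have hRK : K * RK K x ^ 2 = -tanh (√(-K) * x) ^ 2 := by
    rw [RK_eq_tanh_div_sqrt, div_pow, Real.sq_sqrt (neg_pos.2 hK).le]
    have := hK.ne
    field_simp
  linarith [Real.tanh_sq_lt_one (√(-K) * x)]

end KleinRadius

section NormalizingConstant

variable {d q γ m : ℕ} {K u : ℝ}

theorem omegaS_pos {n : ℕ} (hn : 0 < n) : 0 < omegaS n := by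
  have hn' : (0 : ℝ) < n := Nat.cast_pos.2 hn
  have := Real.Gamma_pos_of_pos (half_pos hn')
  unfold omegaS
  positivity

theorem Dconst_pos (hq : q < d) (hγ : γ < q) : 0 < Dconst d q γ :=
  div_pos
    (mul_pos (mul_pos (omegaS_pos γ.succ_pos) (omegaS_pos (by lia))) (omegaS_pos (by lia)))
    (mul_pos (omegaS_pos (Nat.succ_pos _)) (omegaS_pos (by lia)))

theorem Cconst_pos (hm : m < d) (hK : K < 0) (hu : 0 < u) : 0 < Cconst K d m u := by
  have hsqrt : 0 < √(-K) := Real.sqrt_pos.2 (neg_pos.2 hK)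
  refine mul_pos (mul_pos (omegaS_pos (by lia)) (by positivity)) ?_
  refine intervalIntegral.intervalIntegral_pos_of_pos_on
    (Continuous.intervalIntegrable (by fun_prop) _ _) (fun r hr => ?_) hu
  have hsinh : 0 < sinh (√(-K) * r) := Real.sinh_pos_iff.2 (mul_pos hsqrt hr.1)
  positivity

/-- The constant `D(d,q,γ) ω_{d-γ} / C_K(d,d-q+γ,u)` in front of the density `f_{d,q,γ,K}`. -/
noncomputable def densityConst (d q γ : ℕ) (K u : ℝ) : ℝ :=
  Dconst d q γ * omegaS (d - γ) / Cconst K d (d - q + γ) u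

theorem densityConst_pos (hq : q < d) (hγ : γ < q) (hK : K < 0) (hu : 0 < u) :
    0 < densityConst d q γ K u :=
  div_pos (mul_pos (Dconst_pos hq hγ) (omegaS_pos (by lia))) (Cconst_pos (by lia) hK hu)

end NormalizingConstant

section BetaWeight

variable {q : ℕ} {s z : ℝ}

/-- The weight `z ^ q (1 - z²) ^ s`, whose integral over `[0, 1]` is a beta integral after
substituting `z²`. -/
noncomputable def betaWeight (q : ℕ) (s z : ℝ) : ℝ := z ^ q * (1 - z ^ 2) ^ s

theorem measurable_betaWeight (q : ℕ) (s : ℝ) : Measurable (betaWeight q s) := by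
  unfold betaWeight
  fun_prop

theorem betaWeight_nonneg (hz : z ∈ Set.Icc 0 1) : 0 ≤ betaWeight q s z :=
  mul_nonneg (pow_nonneg hz.1 q)
    (Real.rpow_nonneg (sub_nonneg.2 (pow_le_one₀ hz.1 hz.2)) s)

theorem intervalIntegrable_betaWeight (q : ℕ) (hs : -1 < s) :
    IntervalIntegrable (betaWeight q s) volume 0 1 := by
  have hsing : IntervalIntegrable (fun z : ℝ => (1 - z) ^ s) volume 0 1 := by
    simpa using
      ((intervalIntegral.intervalIntegrable_rpow' (a := 0) (b := 1) hs).comp_sub_left 1).symm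
  have hcont : ContinuousOn (fun z : ℝ => z ^ q * (1 + z) ^ s) (Set.uIcc 0 1) := by
    refine ContinuousOn.mul (by fun_prop) (ContinuousOn.rpow_const (by fun_prop) fun z hz => ?_)
    rw [Set.uIcc_of_le zero_le_one] at hz
    exact Or.inl (by linarith [hz.1])
  refine (hsing.mul_continuousOn hcont).congr fun z hz => ?_
  rw [Set.uIoc_of_le zero_le_one] at hz
  have hfactor : (1 - z ^ 2) ^ s = (1 - z) ^ s * (1 + z) ^ s := by
    rw [← Real.mul_rpow (by linarith [hz.2]) (by linarith [hz.1])]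
    ring_nf
  simp only [betaWeight, hfactor]
  ring

theorem integral_betaWeight_pos (q : ℕ) (hs : -1 < s) : 0 < ∫ z in (0:ℝ)..1, betaWeight q s z := by
  refine intervalIntegral.intervalIntegral_pos_of_pos_on (intervalIntegrable_betaWeight q hs)
    (fun z hz => ?_) zero_lt_one
  exact mul_pos (pow_pos hz.1 q)
    (Real.rpow_pos_of_pos (sub_pos.2 (pow_lt_one₀ hz.1.le hz.2 two_ne_zero)) s)

end BetaWeight

theorem stronglyMeasurable_intervalIntegral {X E : Type*} [MeasurableSpace X]
    [NormedAddCommGroup E] [NormedSpace ℝ E] {μ : Measure ℝ} [SFinite μ] {f : X → ℝ → E}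
    {a b : X → ℝ} (hf : StronglyMeasurable (Function.uncurry f)) (ha : Measurable a)
    (hb : Measurable b) : StronglyMeasurable fun x => ∫ z in a x..b x, f x z ∂μ := by
  have setIntegral {a b : X → ℝ} (ha : Measurable a) (hb : Measurable b) :
      StronglyMeasurable fun x => ∫ z in Set.Ioc (a x) (b x), f x z ∂μ := by
    have hset : MeasurableSet {p : X × ℝ | p.2 ∈ Set.Ioc (a p.1) (b p.1)} :=
      (measurableSet_lt (ha.comp measurable_fst) measurable_snd).inter
        (measurableSet_le measurable_snd (hb.comp measurable_fst))
    simp only [← integral_indicator measurableSet_Ioc]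
    exact (hf.indicator hset).integral_prod_right'
  exact (setIntegral ha hb).sub (setIntegral hb ha)

section KleinIntegral

variable {q : ℕ} {s e K ρ r : ℝ}

/-- The inner integral of the density `f_{d,q,γ,K}` at `r = R_K(δ)`, with `ρ = R_K(u)`,
`s = (d-q)/2-1` and `e = -(d+1)/2`. -/
noncomputable def kleinIntegral (q : ℕ) (s e K ρ r : ℝ) : ℝ :=
  ∫ z in (0:ℝ)..min 1 (ρ / r), betaWeight q s z * (1 + K * r ^ 2 * z ^ 2) ^ e

theorem measurable_kleinIntegral (q : ℕ) (s e K ρ : ℝ) : Measurable (kleinIntegral q s e K ρ) := by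
  refine (stronglyMeasurable_intervalIntegral (Measurable.stronglyMeasurable ?_)
    measurable_const (by fun_prop)).measurable
  have := measurable_betaWeight q s
  fun_prop

theorem one_add_mul_sq_le_of_le_div {z : ℝ} (hK : K ≤ 0) (hr : 0 < r)
    (hz : 0 ≤ z) (hzρ : z ≤ ρ / r) : 1 + K * ρ ^ 2 ≤ 1 + K * r ^ 2 * z ^ 2 := by
  have hsq : (z * r) ^ 2 ≤ ρ ^ 2 :=
    pow_le_pow_left₀ (mul_nonneg hz hr.le) ((le_div_iff₀ hr).1 hzρ) 2
  linarith [mul_le_mul_of_nonpos_left hsq hK]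

theorem intervalIntegrable_betaWeight_min (q : ℕ) (hs : -1 < s) (hρ : 0 ≤ ρ) (hr : 0 ≤ r) :
    IntervalIntegrable (betaWeight q s) volume 0 (min 1 (ρ / r)) := by
  refine (intervalIntegrable_betaWeight q hs).mono_set ?_
  rw [Set.uIcc_of_le (by positivity), Set.uIcc_of_le zero_le_one]
  exact Set.Icc_subset_Icc_right (min_le_left _ _)

theorem intervalIntegrable_kleinIntegrand (q : ℕ) (e : ℝ) (hs : -1 < s) (hK : K ≤ 0) (hρ : 0 ≤ ρ)
    (hρK : 0 < 1 + K * ρ ^ 2) (hr : 0 < r) :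
    IntervalIntegrable (fun z => betaWeight q s z * (1 + K * r ^ 2 * z ^ 2) ^ e) volume
      0 (min 1 (ρ / r)) := by
  refine (intervalIntegrable_betaWeight_min q hs hρ hr.le).mul_continuousOn
    (ContinuousOn.rpow_const (by fun_prop) fun z hz => ?_)
  rw [Set.uIcc_of_le (by positivity)] at hz
  have hlower := one_add_mul_sq_le_of_le_div hK hr hz.1 (hz.2.trans (min_le_right _ _))
  exact Or.inl (hρK.trans_le hlower).ne'

theorem kleinIntegral_nonneg (hK : K ≤ 0) (hρ : 0 ≤ ρ) (hρK : 0 ≤ 1 + K * ρ ^ 2) (hr : 0 < r) :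
    0 ≤ kleinIntegral q s e K ρ r := by
  refine intervalIntegral.integral_nonneg (by positivity) fun z hz => mul_nonneg ?_ ?_
  · exact betaWeight_nonneg ⟨hz.1, hz.2.trans (min_le_left _ _)⟩
  · have hlower := one_add_mul_sq_le_of_le_div hK hr hz.1 (hz.2.trans (min_le_right _ _))
    exact Real.rpow_nonneg (hρK.trans hlower) e

theorem kleinIntegral_le (hs : -1 < s) (he : e ≤ 0) (hK : K ≤ 0) (hρ : 0 ≤ ρ)
    (hρK : 0 < 1 + K * ρ ^ 2) (hr : 0 < r) :
    kleinIntegral q s e K ρ r ≤ (∫ z in (0:ℝ)..1, betaWeight q s z) * (1 + K * ρ ^ 2) ^ e := by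
  have hmin : 0 ≤ min 1 (ρ / r) := by positivity
  calc kleinIntegral q s e K ρ r
      ≤ ∫ z in (0:ℝ)..min 1 (ρ / r), betaWeight q s z * (1 + K * ρ ^ 2) ^ e := by
        refine intervalIntegral.integral_mono_on hmin
          (intervalIntegrable_kleinIntegrand q e hs hK hρ hρK hr)
          ((intervalIntegrable_betaWeight_min q hs hρ hr.le).mul_const _) fun z hz => ?_
        have hlower := one_add_mul_sq_le_of_le_div hK hr hz.1 (hz.2.trans (min_le_right _ _))
        exact mul_le_mul_of_nonneg_left (Real.rpow_le_rpow_of_nonpos hρK hlower he)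
          (betaWeight_nonneg ⟨hz.1, hz.2.trans (min_le_left _ _)⟩)
    _ = (∫ z in (0:ℝ)..min 1 (ρ / r), betaWeight q s z) * (1 + K * ρ ^ 2) ^ e :=
        intervalIntegral.integral_mul_const _ _
    _ ≤ (∫ z in (0:ℝ)..1, betaWeight q s z) * (1 + K * ρ ^ 2) ^ e := by
        gcongr
        refine intervalIntegral.integral_mono_interval le_rfl hmin (min_le_left _ _) ?_
          (intervalIntegrable_betaWeight q hs)
        filter_upwards [ae_restrict_mem measurableSet_Ioc] with z hz
        exact betaWeight_nonneg (Set.Ioc_subset_Icc_self hz)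

theorem integral_betaWeight_le_kleinIntegral (hs : -1 < s) (he : e ≤ 0) (hK : K ≤ 0)
    (hρK : 0 < 1 + K * ρ ^ 2) (hr : 0 < r) (hrρ : r ≤ ρ) :
    ∫ z in (0:ℝ)..1, betaWeight q s z ≤ kleinIntegral q s e K ρ r := by
  have hmin : min 1 (ρ / r) = 1 := min_eq_left ((one_le_div hr).2 hrρ)
  have hint := intervalIntegrable_kleinIntegrand q e hs hK (hr.le.trans hrρ) hρK hr
  rw [hmin] at hint
  rw [kleinIntegral, hmin]
  refine intervalIntegral.integral_mono_on zero_le_one (intervalIntegrable_betaWeight q hs) hint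
    fun z hz => le_mul_of_one_le_right (betaWeight_nonneg hz) ?_
  have hlower := one_add_mul_sq_le_of_le_div hK hr hz.1 (hz.2.trans ((one_le_div hr).2 hrρ))
  have hupper : 1 + K * r ^ 2 * z ^ 2 ≤ 1 := by
    rw [mul_assoc, add_le_iff_nonpos_right]
    exact mul_nonpos_of_nonpos_of_nonneg hK (by positivity)
  exact Real.one_le_rpow_of_pos_of_le_one_of_nonpos (hρK.trans_le hlower) hupper he

end KleinIntegral

section Moments

variable {f : ℝ → ℝ} {a b p c C ε : ℝ}

theorem integrableOn_rpow_mul_of_abs_le_rpow_mul_exp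
    (hf : AEStronglyMeasurable f (volume.restrict (Set.Ioi 0))) (hb : 0 < b) (hap : -1 < a + p)
    (hle : ∀ x > 0, |f x| ≤ C * (x ^ p * exp (-b * x))) :
    IntegrableOn (fun x => x ^ a * f x) (Set.Ioi 0) := by
  have hdom : IntegrableOn (fun x : ℝ => C * (x ^ (a + p) * exp (-b * x ^ (1 : ℝ)))) (Set.Ioi 0) :=
    (integrableOn_rpow_mul_exp_neg_mul_rpow hap one_pos hb).const_mul C
  have hpow : Measurable fun x : ℝ => x ^ a := by fun_prop
  refine hdom.mono' (hpow.aestronglyMeasurable.mul hf) ?_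
  filter_upwards [ae_restrict_mem measurableSet_Ioi] with x (hx : 0 < x)
  calc ‖x ^ a * f x‖ = x ^ a * |f x| := by
        rw [norm_mul, Real.norm_of_nonneg (by positivity), Real.norm_eq_abs]
    _ ≤ x ^ a * (C * (x ^ p * exp (-b * x))) := by gcongr; exact hle x hx
    _ = C * (x ^ (a + p) * exp (-b * x ^ (1 : ℝ))) := by
        rw [Real.rpow_add hx, Real.rpow_one]
        ring

theorem neg_one_lt_add_of_integrableOn_rpow_mul (hε : 0 < ε) (hc : 0 < c)
    (hle : ∀ x ∈ Set.Ioo 0 ε, c * x ^ p ≤ f x)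
    (hint : IntegrableOn (fun x => x ^ a * f x) (Set.Ioo 0 ε)) : -1 < a + p := by
  rw [← intervalIntegral.integrableOn_Ioo_rpow_iff hε]
  refine (hint.const_mul c⁻¹).mono' (Measurable.aestronglyMeasurable (by fun_prop)) ?_
  filter_upwards [ae_restrict_mem measurableSet_Ioo] with x hx
  have hx0 : 0 < x := hx.1
  calc ‖x ^ (a + p)‖ = c⁻¹ * (x ^ a * (c * x ^ p)) := by
        rw [Real.norm_of_nonneg (by positivity), Real.rpow_add hx0]
        field_simp
    _ ≤ c⁻¹ * (x ^ a * f x) := by gcongr; exact hle x hx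

end Moments

section Density

variable {d q γ : ℕ} {K u δ : ℝ}

theorem fdens_eq_mul_kleinIntegral (d q γ : ℕ) (K u δ : ℝ) :
    fdens d q γ K u δ = densityConst d q γ K u *
      (RK K δ ^ ((q : ℝ) - γ - 1) / cosh (√(-K) * δ) ^ 2) *
      kleinIntegral q (((d : ℝ) - q) / 2 - 1) (-((d : ℝ) + 1) / 2) K (RK K u) (RK K δ) :=
  rfl

theorem measurable_fdens (d q γ : ℕ) (K u : ℝ) : Measurable (fdens d q γ K u) := by
  have hklein := measurable_kleinIntegral q (((d : ℝ) - q) / 2 - 1) (-((d : ℝ) + 1) / 2) K (RK K u)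
  have hRK := measurable_RK K
  simp only [funext (fdens_eq_mul_kleinIntegral d q γ K u)]
  fun_prop

theorem fdens_nonneg (hq : q < d) (hγ : γ < q) (hK : K < 0) (hu : 0 < u) (hδ : 0 < δ) :
    0 ≤ fdens d q γ K u δ := by
  have hconst := densityConst_pos hq hγ hK hu
  have hR := RK_pos hK hδ
  rw [fdens_eq_mul_kleinIntegral]
  exact mul_nonneg (by positivity)
    (kleinIntegral_nonneg hK.le (RK_pos hK hu).le (one_add_mul_RK_sq_pos hK).le hR)

theorem neg_one_lt_weightExponent (hq : q < d) : -1 < ((d : ℝ) - q) / 2 - 1 := by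
  have : (q : ℝ) < d := Nat.cast_lt.2 hq
  linarith

theorem kernelExponent_nonpos (d : ℕ) : -((d : ℝ) + 1) / 2 ≤ 0 := by
  linarith [Nat.cast_nonneg (α := ℝ) d]

theorem radialExponent_nonneg (hγ : γ < q) : 0 ≤ (q : ℝ) - γ - 1 := by
  have : (γ : ℝ) + 1 ≤ q := mod_cast hγ
  linarith

theorem exists_fdens_le (hq : q < d) (hγ : γ < q) (hK : K < 0) (hu : 0 < u) :
    ∃ C, ∀ δ > 0,
      fdens d q γ K u δ ≤ C * (δ ^ ((q : ℝ) - γ - 1) * exp (-(2 * √(-K)) * δ)) := by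
  set p : ℝ := (q : ℝ) - γ - 1
  set s : ℝ := ((d : ℝ) - q) / 2 - 1
  set e : ℝ := -((d : ℝ) + 1) / 2
  set A := densityConst d q γ K u
  set M := (∫ z in (0:ℝ)..1, betaWeight q s z) * (1 + K * RK K u ^ 2) ^ e
  have hApos : 0 < A := densityConst_pos hq hγ hK hu
  refine ⟨A * 4 * M, fun δ hδ => ?_⟩
  have hR := RK_pos hK hδ
  have hklein_nonneg : 0 ≤ kleinIntegral q s e K (RK K u) (RK K δ) :=
    kleinIntegral_nonneg hK.le (RK_pos hK hu).le (one_add_mul_RK_sq_pos hK).le hR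
  have hklein : kleinIntegral q s e K (RK K u) (RK K δ) ≤ M :=
    kleinIntegral_le (neg_one_lt_weightExponent hq) (kernelExponent_nonpos d) hK.le
      (RK_pos hK hu).le (one_add_mul_RK_sq_pos hK) hR
  have hpow : RK K δ ^ p ≤ δ ^ p :=
    Real.rpow_le_rpow hR.le (RK_le_self hδ.le) (radialExponent_nonneg hγ)
  have hexp := inv_cosh_sq_le_exp (√(-K) * δ)
  calc fdens d q γ K u δ
      = A * (RK K δ ^ p * (cosh (√(-K) * δ) ^ 2)⁻¹) * kleinIntegral q s e K (RK K u) (RK K δ) := by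
        rw [fdens_eq_mul_kleinIntegral, div_eq_mul_inv]
    _ ≤ A * (δ ^ p * (4 * exp (-2 * (√(-K) * δ)))) * M := by gcongr
    _ = A * 4 * M * (δ ^ p * exp (-(2 * √(-K)) * δ)) := by ring_nf

theorem exists_le_fdens (hq : q < d) (hγ : γ < q) (hK : K < 0) (hu : 0 < u) :
    ∃ c > 0, ∀ δ ∈ Set.Ioo 0 u, c * δ ^ ((q : ℝ) - γ - 1) ≤ fdens d q γ K u δ := by
  set p : ℝ := (q : ℝ) - γ - 1
  set s : ℝ := ((d : ℝ) - q) / 2 - 1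
  set e : ℝ := -((d : ℝ) + 1) / 2
  set A := densityConst d q γ K u
  set B := ∫ z in (0:ℝ)..1, betaWeight q s z
  set H := cosh (√(-K) * u)
  have hApos : 0 < A := densityConst_pos hq hγ hK hu
  have hBpos : 0 < B := integral_betaWeight_pos q (neg_one_lt_weightExponent hq)
  have hHpos : 0 < H := Real.cosh_pos _
  refine ⟨A * B / (H ^ p * H ^ 2), by positivity, fun δ hδ => ?_⟩
  have hδ0 : 0 < δ := hδ.1
  have hR := RK_pos hK hδ0
  have hcosh : cosh (√(-K) * δ) ≤ H := by
    rw [Real.cosh_le_cosh, abs_of_nonneg (by positivity), abs_of_nonneg (by positivity)]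
    exact mul_le_mul_of_nonneg_left hδ.2.le (Real.sqrt_nonneg _)
  have hradius : δ / H ≤ RK K δ :=
    (div_le_div_of_nonneg_left hδ0.le (Real.cosh_pos _) hcosh).trans (div_cosh_le_RK hK hδ0.le)
  have hpow : (δ / H) ^ p ≤ RK K δ ^ p :=
    Real.rpow_le_rpow (by positivity) hradius (radialExponent_nonneg hγ)
  have hklein : B ≤ kleinIntegral q s e K (RK K u) (RK K δ) :=
    integral_betaWeight_le_kleinIntegral (neg_one_lt_weightExponent hq) (kernelExponent_nonpos d)
      hK.le (one_add_mul_RK_sq_pos hK) hR (RK_monotone K hδ.2.le)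
  calc A * B / (H ^ p * H ^ 2) * δ ^ p = A * ((δ / H) ^ p / H ^ 2) * B := by
        rw [Real.div_rpow hδ0.le hHpos.le]
        ring
    _ ≤ A * (RK K δ ^ p / cosh (√(-K) * δ) ^ 2) * kleinIntegral q s e K (RK K u) (RK K δ) := by
        gcongr
    _ = fdens d q γ K u δ := (fdens_eq_mul_kleinIntegral d q γ K u δ).symm

end Density

theorem negative_moments_general (d q γ : ℕ) (hq : q < d) (hγ : γ < q) (K u : ℝ) (hK : K < 0)
    (hu : 0 < u) (α : ℝ) :
    IntegrableOn (fun δ : ℝ => δ ^ α * fdens d q γ K u δ) (Set.Ioi 0) ↔ (γ : ℝ) - q < α := by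
  have hexponent : (γ : ℝ) - q < α ↔ -1 < α + ((q : ℝ) - γ - 1) := by
    constructor <;> intro h <;> linarith
  rw [hexponent]
  constructor
  · intro hint
    obtain ⟨c, hc, hle⟩ := exists_le_fdens hq hγ hK hu
    exact neg_one_lt_add_of_integrableOn_rpow_mul hu hc hle
      (hint.mono_set Set.Ioo_subset_Ioi_self)
  · intro hα
    obtain ⟨C, hle⟩ := exists_fdens_le hq hγ hK hu
    have hrate : 0 < 2 * √(-K) := mul_pos two_pos (Real.sqrt_pos.2 (neg_pos.2 hK))
    refine integrableOn_rpow_mul_of_abs_le_rpow_mul_exp (C := C)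
      (measurable_fdens d q γ K u).aestronglyMeasurable hrate hα fun δ hδ => ?_
    rw [abs_of_nonneg (fdens_nonneg hq hγ hK hu hδ)]
    exact hle δ hδ

/-- for `α ≤ 0` the moment integral `∫_0^∞ δ^α f(δ) dδ` is finite
if and only if `α > γ - q`. -/
theorem negative_moments (d q γ : ℕ) (hd : 2 ≤ d) (hq1 : 1 ≤ q) (hq2 : q ≤ d - 1)
    (hγ : γ ≤ q - 1) (K u : ℝ) (hK : K < 0) (hu : 0 < u) :
    ∀ α : ℝ, α ≤ 0 →
      (MeasureTheory.IntegrableOn (fun δ : ℝ => δ ^ α * fdens d q γ K u δ)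
          (Set.Ioi (0 : ℝ)) ↔ (γ : ℝ) - (q : ℝ) < α) :=
  fun α _ => negative_moments_general d q γ (by lia) (by lia) K u hK hu α
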